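/- Let α ∈ [0,1] be irrational and let 0 < δ ≤ ∞. For every ε > 0 there exist a Borel set C ⊆ D(δ), a Borel probability measure μ on [0,1] with μ(C) = 1, and r₀ ∈ (0,1) such that for every x ∈ C and every r with 0 < r ≤ r₀, one has μ(B(x,r)) ≤ ε·(−log r)^{−1}, where B(x,r) is the closed interval of radius r centered at x. In particular ℋ^{ω_1}(D(δ)) = ∞. -/

import Mathlib

open Filter MeasureTheory Set
open scoped ENNReal NNReal Classical

/-- Distance from `x : ℝ` to the nearest integer, i.e. `‖x‖_{ℝ/ℤ}`. -/
noncomputable def distZ (x : ℝ) : ℝ := |x - round x|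

/-- The `ω`-Hausdorff measure of a set `S ⊆ ℝ`: the limit as `ε → 0⁺` (equivalently the
supremum over `ε > 0`, by monotonicity) of the infimum of `∑ᵢ ω (bᵢ - aᵢ)` over countable
covers of `S` by intervals `(aᵢ, bᵢ)` of length at most `ε`. -/
noncomputable def gaugeHaus (ω : ℝ → ℝ) (S : Set ℝ) : ℝ≥0∞ :=
  ⨆ (ε : ℝ) (_ : 0 < ε),
    ⨅ (a : ℕ → ℝ) (b : ℕ → ℝ) (_ : S ⊆ ⋃ i, Set.Ioo (a i) (b i))
      (_ : ∀ i, a i ≤ b i ∧ b i - a i ≤ ε),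
      ∑' i, ENNReal.ofReal (ω (b i - a i))

/-- The gauge function `ω_s(r) = (-log r)^{-s}` for `0 < r < 1`, and `ω_s(0) = 0`. -/
noncomputable def omegaS (s : ℝ) (r : ℝ) : ℝ := if 0 < r then (-Real.log r) ^ (-s) else 0

/-- The resonance strength `δ(α, x) = limsup_{|k| → ∞} (-log ‖x - kα‖_{ℝ/ℤ}) / |k|`,
with the convention that it is `∞` when `x ≡ kα (mod ℤ)` for some `k ∈ ℤ`. -/

noncomputable def resStrength (α x : ℝ) : ℝ≥0∞ :=
  if ∃ k m : ℤ, x = (k : ℝ) * α + (m : ℝ) then ⊤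
  else Filter.limsup
    (fun k : ℤ => ENNReal.ofReal (-Real.log (distZ (x - (k : ℝ) * α)) / |(k : ℝ)|))
    Filter.cofinite

/-- The exact resonance level set `D(δ) = {x ∈ [0,1] : δ(α,x) = δ}`. -/
noncomputable def resSet (α : ℝ) (δ : ℝ≥0∞) : Set ℝ :=
  {x ∈ Set.Icc (0 : ℝ) 1 | resStrength α x = δ}


theorem exists_probabilityMeasure_of_eventually (ν : ℕ → ProbabilityMeasure ℝ)
    (hν : ∀ j, (ν j : Measure ℝ) (Icc 0 1) = 1) :
    ∃ μ : Measure ℝ, IsProbabilityMeasure μ ∧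
      (∀ F, IsClosed F → (∀ᶠ j in atTop, (ν j : Measure ℝ) F = 1) → μ F = 1) ∧
      ∀ (U : Set ℝ) (c : ℝ≥0∞), IsOpen U → (∀ᶠ j in atTop, (ν j : Measure ℝ) U ≤ c) → μ U ≤ c := by
  have htight : IsTightMeasureSet {((m : ProbabilityMeasure ℝ) : Measure ℝ) | m ∈ range ν} := by
    rw [isTightMeasureSet_iff_exists_isCompact_measure_compl_le]
    intro ε _
    refine ⟨Icc 0 1, isCompact_Icc, ?_⟩
    rintro _ ⟨_, ⟨j, rfl⟩, rfl⟩
    rw [prob_compl_eq_zero_iff measurableSet_Icc |>.2 (hν j)]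
    exact zero_le
  have hc := isCompact_closure_of_isTightMeasureSet htight
  obtain ⟨μ, -, hμ⟩ := hc.ultrafilter_le_nhds ((hyperfilter ℕ).map ν) (by
    rw [le_principal_iff]
    exact Filter.mem_map.2 (Filter.univ_mem' fun j => subset_closure ⟨j, rfl⟩))
  have hle : (hyperfilter ℕ : Filter ℕ) ≤ atTop := Nat.hyperfilter_le_atTop
  have hlim : Tendsto ν (hyperfilter ℕ : Filter ℕ) (nhds μ) := hμ
  refine ⟨μ, inferInstance, fun F hF h => ?_, fun U c hU h => ?_⟩
  · refine le_antisymm prob_le_one ?_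
    refine le_trans ?_ (ProbabilityMeasure.limsup_measure_closed_le_of_tendsto hlim hF)
    exact le_limsup_of_frequently_le ((h.filter_mono hle).mono fun j hj => hj.ge).frequently
  · refine (ProbabilityMeasure.le_liminf_measure_open_of_tendsto hlim hU).trans ?_
    exact liminf_le_of_frequently_le (h.filter_mono hle).frequently

section Tree

variable {V : Type*} {S : ℕ → Finset V} {ch : ℕ → V → Finset V} {I J : V → Set ℝ}

theorem pairwiseDisjoint_of_tree {v₀ : V} (hS0 : S 0 = {v₀})
    (hS : ∀ n, S (n + 1) = (S n).biUnion (ch n)) (hIJ : ∀ n, ∀ v ∈ S n, I v ⊆ J v)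
    (hJI : ∀ n, ∀ v ∈ S n, ∀ u ∈ ch n v, J u ⊆ I v)
    (hdisj : ∀ n, ∀ v ∈ S n, (ch n v : Set V).PairwiseDisjoint J) (n : ℕ) :
    (S n : Set V).PairwiseDisjoint J := by
  induction n with
  | zero => simp [hS0]
  | succ n ih =>
    intro u hu u' hu' hne
    rw [hS, Finset.mem_coe, Finset.mem_biUnion] at hu hu'
    obtain ⟨v, hv, huv⟩ := hu
    obtain ⟨v', hv', huv'⟩ := hu'
    by_cases h : v = v'
    · subst h
      exact hdisj n v hv huv huv' hne
    · exact (ih hv hv' h).mono ((hJI n v hv u huv).trans (hIJ n v hv))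
        ((hJI n v' hv' u' huv').trans (hIJ n v' hv'))

/-- The mass distribution principle on a tree of closed sets: consistent masses on the nodes
come from a probability measure. -/
theorem exists_probabilityMeasure_of_tree {v₀ : V} {w : V → ℝ≥0∞} (hS0 : S 0 = {v₀})
    (hw0 : w v₀ = 1) (hI0 : I v₀ ⊆ Icc 0 1)
    (hS : ∀ n, S (n + 1) = (S n).biUnion (ch n)) (hI : ∀ v, IsClosed (I v))
    (hne : ∀ n, ∀ v ∈ S n, (I v).Nonempty)
    (hIJ' : ∀ n, ∀ v ∈ S n, I v ⊆ interior (J v))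
    (hJI : ∀ n, ∀ v ∈ S n, ∀ u ∈ ch n v, J u ⊆ I v)
    (hdisj : ∀ n, ∀ v ∈ S n, (ch n v : Set V).PairwiseDisjoint J)
    (hw : ∀ n, ∀ v ∈ S n, ∑ u ∈ ch n v, w u = w v) :
    ∃ μ : Measure ℝ, IsProbabilityMeasure μ ∧ (∀ n, μ (⋃ v ∈ S n, I v) = 1) ∧
      ∀ n, ∀ v ∈ S n, μ (I v) ≤ w v := by
  have hIJ : ∀ n, ∀ v ∈ S n, I v ⊆ J v := fun n v hv => (hIJ' n v hv).trans interior_subset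
  have hJ := pairwiseDisjoint_of_tree hS0 hS hIJ hJI hdisj
  choose! pt hpt using fun v (h : (I v).Nonempty) => h
  have hpt' : ∀ n, ∀ v ∈ S n, pt v ∈ I v := fun n v hv => hpt v (hne n v hv)
  have hchS : ∀ n, ∀ v ∈ S n, ∀ u ∈ ch n v, u ∈ S (n + 1) := fun n v hv u hu => by
    rw [hS]; exact Finset.mem_biUnion.2 ⟨v, hv, hu⟩
  let ν : ℕ → Measure ℝ := fun j => ∑ v ∈ S j, w v • Measure.dirac (pt v)
  have hνapp : ∀ j A, MeasurableSet A → ν j A = ∑ v ∈ S j, w v * A.indicator 1 (pt v) := by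
    intro j A hA
    simp [ν, Measure.finsetSum_apply, hA]
  have hchdisj : ∀ n, (S n : Set V).PairwiseDisjoint (ch n) := by
    intro n v hv v' hv' hvv'
    rw [Function.onFun, Finset.disjoint_left]
    intro u hu hu'
    have h1 := hpt' (n + 1) u (hchS n v hv u hu)
    exact Set.disjoint_left.1 (hJ n hv hv' hvv')
      (hIJ n v hv (hJI n v hv u hu (hIJ _ u (hchS n v hv u hu) h1)))
      (hIJ n v' hv' (hJI n v' hv' u hu' (hIJ _ u (hchS n v hv u hu) h1)))
  have hstep : ∀ n A, MeasurableSet A → (∀ u ∈ S n, I u ⊆ A ∨ Disjoint (I u) A) →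
      ν (n + 1) A = ν n A := by
    intro n A hA hsat
    rw [hνapp _ _ hA, hνapp _ _ hA, hS, Finset.sum_biUnion (hchdisj n)]
    refine Finset.sum_congr rfl fun v hv => ?_
    rw [← hw n v hv, Finset.sum_mul]
    refine Finset.sum_congr rfl fun u hu => ?_
    have h1 : pt u ∈ I v := hJI n v hv u hu
      (hIJ _ u (hchS n v hv u hu) (hpt' (n + 1) u (hchS n v hv u hu)))
    have h2 : pt v ∈ I v := hpt' n v hv
    congr 1
    rcases hsat v hv with h | h
    · simp [h h1, h h2]
    · simp [Set.disjoint_left.1 h h1, Set.disjoint_left.1 h h2]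
  have hiter : ∀ n A, MeasurableSet A → (∀ u ∈ S n, I u ⊆ A ∨ Disjoint (I u) A) → ∀ i,
      (∀ u ∈ S (n + i), I u ⊆ A ∨ Disjoint (I u) A) ∧ ν (n + i) A = ν n A := by
    intro n A hA hsat i
    induction i with
    | zero => exact ⟨hsat, rfl⟩
    | succ i ih =>
      refine ⟨fun u hu => ?_, (hstep _ _ hA ih.1).trans ih.2⟩
      rw [← add_assoc, hS, Finset.mem_biUnion] at hu
      obtain ⟨v, hv, huv⟩ := hu
      have hsub : I u ⊆ I v := (hIJ _ u (hchS _ v hv u huv)).trans (hJI _ v hv u huv)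
      exact (ih.1 v hv).imp hsub.trans fun h => h.mono_left hsub
  have hν0 : ν 0 = Measure.dirac (pt v₀) := by simp [ν, hS0, hw0]
  have htotal : ∀ j, ν j univ = 1 := fun j => by
    have := (hiter 0 univ MeasurableSet.univ (fun u _ => Or.inl (subset_univ _)) j).2
    rw [zero_add] at this
    rw [this, hν0]; simp
  have hprob : ∀ j, IsProbabilityMeasure (ν j) := fun j => ⟨htotal j⟩
  have hunion : ∀ n j, n ≤ j → ν j (⋃ v ∈ S n, I v) = 1 := by
    intro n j hj
    obtain ⟨i, rfl⟩ := Nat.exists_eq_add_of_le hj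
    have hm : MeasurableSet (⋃ v ∈ S n, I v) :=
      Finset.measurableSet_biUnion _ fun v _ => (hI v).measurableSet
    rw [(hiter n _ hm (fun u hu => Or.inl (subset_biUnion_of_mem (u := I) hu)) i).2, hνapp _ _ hm,
      ← htotal n, hνapp _ _ MeasurableSet.univ]
    refine Finset.sum_congr rfl fun v hv => ?_
    have : pt v ∈ ⋃ v ∈ S n, I v := mem_biUnion hv (hpt' n v hv)
    rw [indicator_of_mem this, indicator_of_mem (mem_univ _)]
  obtain ⟨μ, hμ, hclosed, hopen⟩ := exists_probabilityMeasure_of_eventually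
    (fun j => ⟨ν j, hprob j⟩) (fun j => by
      have := hprob j
      change ν j (Icc 0 1) = 1
      refine le_antisymm prob_le_one ((hunion 0 j (zero_le)).ge.trans (measure_mono ?_))
      simpa [hS0] using hI0)
  refine ⟨μ, hμ, fun n => hclosed _ ((S n).finite_toSet.isClosed_biUnion fun v _ => hI v)
    (eventually_atTop.2 ⟨n, fun j hj => hunion n j hj⟩), fun n v hv => ?_⟩
  refine (measure_mono (hIJ' n v hv)).trans (hopen _ _ isOpen_interior
    (eventually_atTop.2 ⟨n, fun j hj => ?_⟩))
  obtain ⟨i, rfl⟩ := Nat.exists_eq_add_of_le hj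
  have hother : ∀ u ∈ S n, u ≠ v → Disjoint (I u) (interior (J v)) := fun u hu huv =>
    (hJ n hu hv huv).mono (hIJ n u hu) interior_subset
  have hm : MeasurableSet (interior (J v)) := isOpen_interior.measurableSet
  change ν (n + i) (interior (J v)) ≤ w v
  rw [(hiter n _ hm (fun u hu => ?_) i).2, hνapp _ _ hm,
    Finset.sum_eq_single_of_mem v hv fun u hu huv => ?_]
  · exact (mul_le_of_le_one_right' (Set.indicator_le_self' (by simp) _))
  · rw [indicator_of_notMem (Set.disjoint_left.1 (hother u hu huv) (hpt' n u hu)), mul_zero]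
  · by_cases h : u = v
    · subst h; exact Or.inl (hIJ' n u hu)
    · exact Or.inr (hother u hu h)

end Tree

theorem distZ_nonneg (x : ℝ) : 0 ≤ distZ x := abs_nonneg _

theorem distZ_le_abs_sub_int (x : ℝ) (m : ℤ) : distZ x ≤ |x - m| := round_le x m

theorem distZ_le_add (x y : ℝ) : distZ x ≤ distZ y + |x - y| := by
  refine (distZ_le_abs_sub_int x (round y)).trans ?_
  have := abs_add_le (y - round y) (x - y)
  rwa [show y - round y + (x - y) = x - round y by ring] at this

theorem distZ_add_int (x : ℝ) (m : ℤ) : distZ (x + m) = distZ x := by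
  simp [distZ, round_add_intCast]

theorem distZ_eq_zero_iff (x : ℝ) : distZ x = 0 ↔ ∃ m : ℤ, x = m := by
  rw [distZ, abs_eq_zero, sub_eq_zero]
  refine ⟨fun h => ⟨_, h⟩, ?_⟩
  rintro ⟨m, rfl⟩
  simp

theorem exists_rat_abs_sub_lt_of_le_den {α : ℝ} (hα : Irrational α) (N : ℕ) :
    ∃ r : ℚ, N ≤ r.den ∧ |α - r| < 1 / (r.den : ℝ) ^ 2 := by
  by_contra! h
  refine Real.infinite_rat_abs_sub_lt_one_div_den_sq_of_irrational hα ?_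
  obtain ⟨M, hM⟩ := exists_nat_ge ((|α| + 1) * N)
  have hfin : ((Icc (-(M : ℤ)) M) ×ˢ (Iic N : Set ℕ)).Finite :=
    (finite_Icc _ _).prod (finite_Iic N)
  refine (hfin.preimage (f := fun r : ℚ => (r.num, r.den)) ?_).subset ?_
  · intro r _ r' _ hrr
    simp only [Prod.mk.injEq] at hrr
    exact Rat.ext hrr.1 hrr.2
  · intro r hr
    have hden : r.den < N := by
      by_contra! hN
      exact (h r hN).not_gt hr
    have hd1 : (1 : ℝ) ≤ r.den := by exact_mod_cast r.pos
    have hr1 : |α - r| < 1 := lt_of_lt_of_le hr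
      ((div_le_one (by positivity)).2 (one_le_pow₀ hd1))
    have hrα : |(r : ℝ)| ≤ |α| + 1 := by
      have := abs_sub_abs_le_abs_sub (r : ℝ) α
      rw [abs_sub_comm] at this
      linarith
    have hnum : |(r.num : ℝ)| ≤ M := by
      have : (r.num : ℝ) = r * r.den := by exact_mod_cast (Rat.mul_den_eq_num r).symm
      rw [this, abs_mul, Nat.abs_cast]
      refine le_trans ?_ hM
      have : (r.den : ℝ) ≤ N := by exact_mod_cast hden.le
      gcongr
    have hnum' : |r.num| ≤ (M : ℤ) := by exact_mod_cast hnum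
    exact ⟨abs_le.1 hnum', hden.le⟩

theorem exists_modulus {α : ℝ} (hα : Irrational α) (N : ℕ) :
    ∃ q : ℕ, N ≤ q ∧ 0 < q ∧
      (∀ x : ℝ, ∃ k m : ℤ, 2 * |k| ≤ q ∧ |x - (k * α + m)| ≤ 1 / q) ∧
      ∀ n : ℤ, n ≠ 0 → |n| < q → 1 / (q : ℝ) ^ 2 ≤ distZ (n * α) := by
  obtain ⟨r, hN, hr⟩ := exists_rat_abs_sub_lt_of_le_den hα N
  have hq : (0 : ℝ) < r.den := by exact_mod_cast r.pos
  have hrval : (r : ℝ) = r.num / r.den := by exact_mod_cast (Rat.num_div_den r).symm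
  have hcop : IsCoprime r.num (r.den : ℤ) := by
    rw [Int.isCoprime_iff_nat_coprime]; simpa using r.reduced
  refine ⟨r.den, hN, r.pos, fun x => ?_, fun n hn0 hnq => ?_⟩
  · obtain ⟨u, v, huv⟩ := hcop
    set a := round (x * r.den) with ha
    set k : ℤ := Int.bmod (a * u) r.den with hk
    have hk2 : 2 * |k| ≤ r.den := by
      have h1 := Int.le_bmod (x := a * u) r.pos
      have h2 := Int.bmod_le (x := a * u) r.pos
      rw [← hk] at h1 h2
      rcases abs_cases k with h | h <;> omega
    obtain ⟨t, ht⟩ : (r.den : ℤ) ∣ a * u - k := Int.dvd_self_sub_bmod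
    have hkey : a = k * r.num + (a * v + t * r.num) * r.den := by
      linear_combination a * (-huv) + r.num * ht
    refine ⟨k, a * v + t * r.num, hk2, ?_⟩
    have hk3 : 2 * |(k : ℝ)| ≤ r.den := by exact_mod_cast hk2
    have hkey' : (a : ℝ) = k * r.num + (a * v + t * r.num) * r.den := by exact_mod_cast hkey
    have hx : |x * r.den - a| ≤ 1 / 2 := abs_sub_round _
    have hsplit : x - (k * α + ((a * v + t * r.num : ℤ) : ℝ)) =
        (x * r.den - a) / r.den - k * (α - r) := by
      rw [hrval]
      push_cast
      field_simp
      linear_combination hkey'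
    rw [hsplit]
    refine (abs_sub _ _).trans ?_
    rw [abs_div, abs_mul, abs_of_pos hq]
    have h1 : |(k : ℝ)| * |α - r| ≤ r.den / 2 * (1 / (r.den : ℝ) ^ 2) :=
      mul_le_mul (by linarith) hr.le (abs_nonneg _) (by positivity)
    have h2 : (r.den : ℝ) / 2 * (1 / (r.den : ℝ) ^ 2) = 1 / 2 / r.den := by field_simp
    have h3 : |x * r.den - a| / r.den ≤ 1 / 2 / r.den := by gcongr
    have h4 : (1 : ℝ) / 2 / r.den + 1 / 2 / r.den = 1 / r.den := by ring
    linarith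
  · set m := round (n * α)
    have hne : n * r.num - m * r.den ≠ 0 := by
      intro h0
      have hdvd : (r.den : ℤ) ∣ n * r.num := ⟨m, by linarith⟩
      have := Int.le_of_dvd (abs_pos.2 hn0) ((dvd_abs _ _).2 (hcop.symm.dvd_of_dvd_mul_right hdvd))
      omega
    have h1 : (1 : ℝ) ≤ |(n : ℝ) * r.num - m * r.den| := by
      exact_mod_cast Int.one_le_abs hne
    have hn1 : |(n : ℝ)| ≤ r.den - 1 := by
      have : |n| ≤ (r.den : ℤ) - 1 := by omega
      exact_mod_cast this
    have hsplit : (n : ℝ) * α - m = (n * r.num - m * r.den) / r.den + n * (α - r) := by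
      rw [hrval]; field_simp; ring
    rw [distZ, hsplit]
    have h2 := abs_sub_abs_le_abs_sub (((n : ℝ) * r.num - m * r.den) / r.den) (-(n * (α - r)))
    rw [sub_neg_eq_add, abs_neg, abs_div, abs_mul, abs_of_pos hq] at h2
    refine le_trans ?_ h2
    have h3 : |(n : ℝ)| * |α - r| ≤ (r.den - 1) * (1 / (r.den : ℝ) ^ 2) :=
      mul_le_mul hn1 hr.le (abs_nonneg _) ((abs_nonneg _).trans hn1)
    have h4 : 1 / (r.den : ℝ) ≤ |(n : ℝ) * r.num - m * r.den| / r.den := by gcongr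
    have h5 : 1 / (r.den : ℝ) - (r.den - 1) * (1 / (r.den : ℝ) ^ 2) = 1 / (r.den : ℝ) ^ 2 := by
      field_simp; ring
    linarith

/-- The points exponentially close, with rate `B`, to some multiple `l * α` with `|l| ≥ K`. -/
def resonantSet (α B : ℝ) (K : ℕ) : Set ℝ :=
  {y | ∃ l : ℤ, (K : ℝ) ≤ |(l : ℝ)| ∧ distZ (y - l * α) < 2 * Real.exp (-(B * |(l : ℝ)|))}

theorem volume_distZ_sub_lt_le (β ρ : ℝ) :
    volume {y | y ∈ Icc (0 : ℝ) 1 ∧ distZ (y - β) < ρ} ≤ ENNReal.ofReal (6 * ρ) := by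
  have hsub : {y | y ∈ Icc (0 : ℝ) 1 ∧ distZ (y - β) < ρ} ⊆
      ⋃ i ∈ ({-1, 0, 1} : Finset ℤ), Metric.ball (β + (i - ⌊β⌋ : ℤ)) ρ := by
    rintro y ⟨⟨h0, h1⟩, hy⟩
    have hh := abs_le.1 (abs_sub_round (y - β))
    have hf := Int.floor_le β
    have hf' := Int.lt_floor_add_one β
    set m := round (y - β)
    have hlo : (-2 : ℝ) < (m + ⌊β⌋ : ℤ) := by push_cast; linarith
    have hhi : ((m + ⌊β⌋ : ℤ) : ℝ) < 2 := by push_cast; linarith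
    have hlo' : -2 < m + ⌊β⌋ := by exact_mod_cast hlo
    have hhi' : m + ⌊β⌋ < 2 := by exact_mod_cast hhi
    refine mem_biUnion (x := m + ⌊β⌋) ?_ ?_
    · simp only [Finset.mem_coe, Finset.mem_insert, Finset.mem_singleton]; omega
    · rw [Metric.mem_ball, Real.dist_eq, add_sub_cancel_right, ← sub_sub]
      exact hy
  refine (measure_mono hsub).trans ((measure_biUnion_finset_le _ _).trans ?_)
  simp only [Real.volume_ball]
  rw [Finset.sum_const, nsmul_eq_mul, show 6 * ρ = 3 * (2 * ρ) by ring,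
    ENNReal.ofReal_mul (by norm_num)]
  simp

theorem exists_volume_resonantSet_le (α : ℝ) {B : ℝ} (hB : 0 < B) :
    ∃ C : ℝ, 0 < C ∧ ∀ K : ℕ, volume (Icc 0 1 ∩ resonantSet α B K) ≤
      ENNReal.ofReal (C * Real.exp (-(B * K))) := by
  have hlt : Real.exp (-B) < 1 := by simpa using hB
  refine ⟨24 * (1 - Real.exp (-B))⁻¹, by have := sub_pos.2 hlt; positivity, fun K => ?_⟩
  let T : ℤ → Set ℝ := fun l =>
    {y | y ∈ Icc (0 : ℝ) 1 ∧ distZ (y - l * α) < 2 * Real.exp (-(B * |(l : ℝ)|))}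
  have hT : ∀ l, volume (T l) ≤ ENNReal.ofReal (12 * Real.exp (-(B * |(l : ℝ)|))) := fun l => by
    refine (volume_distZ_sub_lt_le _ _).trans (le_of_eq ?_)
    congr 1; ring
  have hsub : Icc 0 1 ∩ resonantSet α B K ⊆
      ⋃ i : ℕ, (T ((K + i : ℕ) : ℤ) ∪ T (-((K + i : ℕ) : ℤ))) := by
    rintro y ⟨hy, l, hl, hyl⟩
    have hl' : (K : ℤ) ≤ |l| := by exact_mod_cast hl
    rw [Int.abs_eq_natAbs] at hl'
    obtain ⟨i, hi⟩ := Nat.exists_eq_add_of_le (Int.ofNat_le.1 hl')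
    refine mem_iUnion.2 ⟨i, ?_⟩
    rw [← hi]
    rcases Int.natAbs_eq l with h | h
    · left; rw [← h]; exact ⟨hy, hyl⟩
    · right; rw [← h]; exact ⟨hy, hyl⟩
  have hgeom : HasSum (fun i : ℕ => 24 * Real.exp (-(B * K)) * Real.exp (-B) ^ i)
      (24 * Real.exp (-(B * K)) * (1 - Real.exp (-B))⁻¹) :=
    (hasSum_geometric_of_lt_one (Real.exp_pos _).le hlt).mul_left _
  calc volume (Icc 0 1 ∩ resonantSet α B K)
      ≤ ∑' i : ℕ, volume (T ((K + i : ℕ) : ℤ) ∪ T (-((K + i : ℕ) : ℤ))) :=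
        (measure_mono hsub).trans (measure_iUnion_le _)
    _ ≤ ∑' i : ℕ, ENNReal.ofReal (24 * Real.exp (-(B * K)) * Real.exp (-B) ^ i) := by
        refine ENNReal.tsum_le_tsum fun i => (measure_union_le _ _).trans ?_
        refine (add_le_add (hT _) (hT _)).trans ?_
        rw [← ENNReal.ofReal_add (by positivity) (by positivity)]
        refine ENNReal.ofReal_le_ofReal (le_of_eq ?_)
        rw [← Real.exp_nat_mul, mul_assoc, ← Real.exp_add]
        push_cast
        rw [abs_neg, abs_of_nonneg (by positivity : (0 : ℝ) ≤ K + i),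
          show -(B * K) + i * -B = -(B * (K + i)) by ring]
        ring
    _ = ENNReal.ofReal (24 * (1 - Real.exp (-B))⁻¹ * Real.exp (-(B * K))) := by
        rw [← ENNReal.ofReal_tsum_of_nonneg (fun i => by positivity) hgeom.summable,
          hgeom.tsum_eq]
        congr 1; ring

theorem tendsto_exp_neg_mul_nat {B : ℝ} (hB : 0 < B) :
    Tendsto (fun K : ℕ => Real.exp (-(B * K))) atTop (nhds 0) :=
  Real.tendsto_exp_neg_atTop_nhds_zero.comp
    (tendsto_natCast_atTop_atTop.const_mul_atTop hB)

theorem exists_threshold {A B C : ℝ} (hA : 0 < A) (hAB : A < B) (N : ℕ) :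
    ∃ L : ℕ, ∀ K : ℕ, L ≤ K → N ≤ K ∧ (N : ℝ) ≤ A * K ∧
      C * Real.exp (-(B * K)) ≤ Real.exp (-(A * K)) / 4 := by
  have h1 : ∀ᶠ K : ℕ in atTop, (N : ℝ) ≤ A * K :=
    (tendsto_natCast_atTop_atTop.const_mul_atTop hA).eventually_ge_atTop _
  have h2 : ∀ᶠ K : ℕ in atTop, C * Real.exp (-((B - A) * K)) ≤ 1 / 4 := by
    have := (tendsto_exp_neg_mul_nat (sub_pos.2 hAB)).const_mul C
    rw [mul_zero] at this
    exact (this.eventually_lt_const (by norm_num)).mono fun _ h => h.le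
  obtain ⟨L, hL⟩ := eventually_atTop.1 ((h1.and h2).and (eventually_ge_atTop N))
  refine ⟨L, fun K hK => ⟨(hL K hK).2, (hL K hK).1.1, ?_⟩⟩
  have h3 := (hL K hK).1.2
  have h4 : Real.exp (-(B * K)) = Real.exp (-((B - A) * K)) * Real.exp (-(A * K)) := by
    rw [← Real.exp_add]; congr 1; ring
  rw [h4, ← mul_assoc]
  nlinarith [Real.exp_pos (-(A * K))]

theorem exp_le_one_div_pow_four {α γ A : ℝ} {q L : ℕ} {k m : ℤ} {x : ℝ} (hγA : 4 * γ ≤ A)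
    (hkL : (L : ℝ) ≤ |(k : ℝ)|) (hx : |x - (k * α + m)| ≤ 1 / q)
    (hx' : x ∉ resonantSet α γ L) : Real.exp (-(A * |(k : ℝ)|)) ≤ 1 / (q : ℝ) ^ 4 := by
  have h1 : 2 * Real.exp (-(γ * |(k : ℝ)|)) ≤ distZ (x - k * α) := by
    by_contra! h
    exact hx' ⟨k, hkL, h⟩
  have h2 : distZ (x - k * α) ≤ 1 / q := by
    refine (distZ_le_abs_sub_int _ m).trans ?_
    rwa [sub_sub]
  have h3 : Real.exp (-(γ * |(k : ℝ)|)) ≤ 1 / q := by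
    linarith [Real.exp_pos (-(γ * |(k : ℝ)|))]
  calc Real.exp (-(A * |(k : ℝ)|)) ≤ Real.exp (-(γ * |(k : ℝ)|)) ^ 4 := by
        rw [← Real.exp_nat_mul]
        apply Real.exp_le_exp.2
        push_cast
        nlinarith [abs_nonneg (k : ℝ)]
    _ ≤ (1 / (q : ℝ)) ^ 4 := by gcongr
    _ = 1 / (q : ℝ) ^ 4 := by rw [div_pow, one_pow]

/-- A point slightly to the right of `k * α + m` keeps its distance from all multiples of `α`
of smaller order, provided `k * α + m` was chosen near a point `x` with the same property. -/
theorem separation_of_near {α A B γ : ℝ} {q K₀ L : ℕ} {k m : ℤ} {x y : ℝ} (hγ : 0 < γ)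
    (hγA : 4 * γ ≤ A) (hγB : 4 * γ ≤ B) (hq : 13 ≤ q) (hqL : 3 / q ≤ Real.exp (-(B * L)))
    (hsep : ∀ n : ℤ, n ≠ 0 → |n| < q → 1 / (q : ℝ) ^ 2 ≤ distZ (n * α)) (hk : 2 * |k| ≤ q)
    (hkL : (L : ℝ) ≤ |(k : ℝ)|) (hx : |x - (k * α + m)| ≤ 1 / q)
    (hxB : x ∉ resonantSet α B K₀) (hxγ : x ∉ resonantSet α γ L)
    (hy : |y - (k * α + m)| ≤ 2 * Real.exp (-(A * |(k : ℝ)|))) :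
    distZ (y - k * α) ≤ 2 * Real.exp (-(A * |(k : ℝ)|)) ∧
      (∀ j : ℤ, |j| < |k| → 0 < distZ (y - j * α)) ∧
      ∀ j : ℤ, (K₀ : ℝ) ≤ |(j : ℝ)| → |j| < |k| →
        Real.exp (-(B * |(j : ℝ)|)) ≤ distZ (y - j * α) := by
  set ℓ := Real.exp (-(A * |(k : ℝ)|)) with hℓ
  have hℓq : ℓ ≤ 1 / (q : ℝ) ^ 4 := exp_le_one_div_pow_four hγA hkL hx hxγ
  have hq' : (13 : ℝ) ≤ q := by exact_mod_cast hq
  have hq0 : (0 : ℝ) < q := by linarith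
  have hq4 : 1 / (q : ℝ) ^ 4 ≤ 1 / q := by
    apply one_div_le_one_div_of_le hq0
    calc (q : ℝ) = q ^ 1 := (pow_one _).symm
      _ ≤ q ^ 4 := pow_le_pow_right₀ (by linarith) (by norm_num)
  have hq42 : 162 * (1 / (q : ℝ) ^ 4) ≤ 1 / (q : ℝ) ^ 2 := by
    rw [mul_one_div, div_le_div_iff₀ (by positivity) (by positivity)]
    have : (162 : ℝ) ≤ (q : ℝ) ^ 2 := by nlinarith
    nlinarith [sq_nonneg (q : ℝ)]
  have hsmall : ∀ j : ℤ, |j| < |k| → 1 / (q : ℝ) ^ 2 - 2 * ℓ ≤ distZ (y - j * α) := by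
    intro j hj
    have hn : |k - j| < q := (abs_sub _ _).trans_lt (by omega)
    have h0 : k - j ≠ 0 := by
      intro h
      rw [sub_eq_zero.1 h] at hj
      exact lt_irrefl _ hj
    have h1 := hsep _ h0 hn
    rw [← distZ_add_int _ m] at h1
    have h2 := distZ_le_add (((k - j : ℤ) : ℝ) * α + m) (y - j * α)
    rw [show ((k - j : ℤ) : ℝ) * α + m - (y - j * α) = -(y - (k * α + m)) by push_cast; ring,
      abs_neg] at h2
    linarith
  have hpos : 0 < 1 / (q : ℝ) ^ 4 := by positivity
  refine ⟨(distZ_le_abs_sub_int _ m).trans (by rwa [sub_sub]), fun j hj => ?_, fun j hj hjk => ?_⟩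
  · linarith [hsmall j hj]
  · have hyx : |x - y| ≤ 3 / q := by
      have := abs_sub (x - (k * α + m)) (y - (k * α + m))
      rw [sub_sub_sub_cancel_right] at this
      have h3 : (3 : ℝ) / q = 1 / q + 2 * (1 / q) := by ring
      linarith
    have hcomp := distZ_le_add (x - j * α) (y - j * α)
    rw [sub_sub_sub_cancel_right] at hcomp
    by_cases hjL : |(j : ℝ)| < L
    · have h1 : 2 * Real.exp (-(B * |(j : ℝ)|)) ≤ distZ (x - j * α) := by
        by_contra! h
        exact hxB ⟨j, hj, h⟩
      have h2 : Real.exp (-(B * L)) ≤ Real.exp (-(B * |(j : ℝ)|)) := by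
        apply Real.exp_le_exp.2
        nlinarith
      linarith
    · have h1 : 2 * Real.exp (-(γ * |(j : ℝ)|)) ≤ distZ (x - j * α) := by
        by_contra! h
        exact hxγ ⟨j, not_lt.1 hjL, h⟩
      have hle : Real.exp (-(B * |(j : ℝ)|)) ≤ Real.exp (-(γ * |(j : ℝ)|)) := by
        apply Real.exp_le_exp.2
        nlinarith [abs_nonneg (j : ℝ)]
      have hle4 : Real.exp (-(B * |(j : ℝ)|)) ≤ Real.exp (-(γ * |(j : ℝ)|)) ^ 4 := by
        rw [← Real.exp_nat_mul]
        apply Real.exp_le_exp.2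
        push_cast
        nlinarith [abs_nonneg (j : ℝ)]
      by_cases hR : 3 / (q : ℝ) ≤ Real.exp (-(γ * |(j : ℝ)|))
      · linarith
      · have h2 : Real.exp (-(γ * |(j : ℝ)|)) ^ 4 ≤ (3 / (q : ℝ)) ^ 4 := by
          gcongr
          exact (not_le.1 hR).le
        have h3 : (3 / (q : ℝ)) ^ 4 = 81 * (1 / (q : ℝ) ^ 4) := by
          rw [div_pow]; ring
        have := hsmall j hjk
        linarith

/-- A node of the Cantor construction: an interval `[left, left + len]` of mass `mass`, isolated
from its siblings by `buffer`; `order` is the size of the multiple of `α` it is close to. -/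
structure CantorNode where
  left : ℝ
  len : ℝ
  buffer : ℝ
  mass : ℝ
  order : ℕ

namespace CantorNode

def core (v : CantorNode) : Set ℝ := Icc v.left (v.left + v.len)

def hull (v : CantorNode) : Set ℝ := Icc (v.left - v.buffer) (v.left + v.len + v.buffer)

structure IsGood (α B : ℝ) (v : CantorNode) : Prop where
  len_pos : 0 < v.len
  len_le_buffer : v.len ≤ v.buffer
  mass_pos : 0 < v.mass
  core_subset : v.core ⊆ Icc 0 1
  volume_le : volume (Icc 0 1 ∩ resonantSet α B v.order) ≤ ENNReal.ofReal (v.len / 4)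

/-- Points of `u` are near a multiple of `α` of order `u.order`, but away from the multiples of
smaller order, quantitatively so for those of order at least `K`. -/
def IsResonant (α B : ℝ) (K : ℕ) (u : CantorNode) : Prop :=
  ∀ y ∈ u.core, (∃ k : ℤ, |k| = u.order ∧ distZ (y - k * α) ≤ 2 * u.len) ∧
    (∀ j : ℤ, |j| < u.order → 0 < distZ (y - j * α)) ∧
    ∀ j : ℤ, K ≤ |j| → |j| < u.order → Real.exp (-(B * |(j : ℝ)|)) ≤ distZ (y - j * α)

/-- `u` is an admissible child of `v`, with mass at most `ε / log (1 / u.len)`. -/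
structure IsChild (α A B B' ε : ℝ) (N : ℕ) (u v : CantorNode) : Prop where
  isGood : u.IsGood α B'
  hull_subset : u.hull ⊆ v.core
  mass_le : u.mass ≤ 16 * v.mass * u.buffer / v.len
  len_eq : u.len = Real.exp (-(A * u.order))
  le_order : N ≤ u.order
  le_mul_order : (N : ℝ) ≤ A * u.order
  mass_mul_le : u.mass * (A * u.order) ≤ ε
  isResonant : u.IsResonant α B v.order

theorem hull_nonempty {v : CantorNode} (h : 0 < v.len) (h' : v.len ≤ v.buffer) :
    v.hull.Nonempty :=
  nonempty_Icc.2 (by linarith)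

/-- Data of a ball of radius `η / q` around `k * α + m`, chosen near the point `x`. -/
structure Seed where
  x : ℝ
  q : ℕ
  k : ℤ
  m : ℤ

namespace Seed

noncomputable def center (α : ℝ) (a : Seed) : ℝ := a.k * α + a.m

noncomputable def ball (α η : ℝ) (a : Seed) : Set ℝ := Metric.closedBall (a.center α) (η / a.q)

structure IsAdmissible (α η : ℝ) (E I : Set ℝ) (Q : ℕ) (L : ℕ) (a : Seed) : Prop where
  mem : a.x ∈ E
  le_modulus : Q ≤ a.q
  modulus_pos : 0 < a.q
  separation : ∀ n : ℤ, n ≠ 0 → |n| < a.q → 1 / (a.q : ℝ) ^ 2 ≤ distZ (n * α)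
  two_mul_le : 2 * |a.k| ≤ a.q
  near : |a.x - a.center α| ≤ 1 / a.q
  ball_subset : a.ball α η ⊆ I
  le_order : (L : ℝ) ≤ |(a.k : ℝ)|

noncomputable def node (α A η M : ℝ) (a : Seed) : CantorNode where
  left := a.center α + Real.exp (-(A * |(a.k : ℝ)|))
  len := Real.exp (-(A * |(a.k : ℝ)|))
  buffer := η / (2 * a.q)
  mass := M * (η / (2 * a.q))
  order := a.k.natAbs

theorem hull_node_subset {α A η M : ℝ} {a : Seed} (h : 2 * Real.exp (-(A * |(a.k : ℝ)|)) ≤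
    η / (2 * a.q)) : (a.node α A η M).hull ⊆ a.ball α η := by
  have h1 : η / a.q = η / (2 * a.q) + η / (2 * a.q) := by ring
  have h2 := Real.exp_pos (-(A * |(a.k : ℝ)|))
  rw [ball, Real.closedBall_eq_Icc]
  apply Icc_subset_Icc <;> simp only [node] <;> linarith

/-- Vitali covering by admissible balls. -/
theorem exists_finset_admissible {α η ℓ : ℝ} (hα : Irrational α) {E I : Set ℝ} (hη : 0 < η)
    (hη1 : η ≤ 1) (Q L : ℕ) (hEI : E ⊆ interior I)
    (hE : ∀ x ∈ E, ∀ k m : ℤ, x ≠ k * α + m) (hvol : ENNReal.ofReal ℓ < volume E) :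
    ∃ s : Finset Seed, (∀ a ∈ s, a.IsAdmissible α η E I Q L) ∧
      (s : Set Seed).PairwiseDisjoint (ball α η) ∧ ℓ < ∑ a ∈ s, 2 * (η / a.q) := by
  have hvolball : ∀ a : Seed, volume (a.ball α η) = ENNReal.ofReal (2 * (η / a.q)) :=
    fun a => Real.volume_closedBall _ _
  obtain ⟨u, hut, huc, hud, hu0⟩ : ∃ u ⊆ {a : Seed | a.IsAdmissible α η E I Q L}, u.Countable ∧
      u.PairwiseDisjoint (ball α η) ∧ volume (E \ ⋃ a ∈ u, ball α η a) = 0 := by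
    refine Vitali.exists_disjoint_covering_ae volume E _ (Real.toNNReal (6 / η))
      (fun a => 2 / (a.q : ℝ)) Seed.x (ball α η) ?_ ?_ ?_
      (fun a _ => Metric.isClosed_closedBall) ?_
    · intro a ha
      have hq : (0 : ℝ) < a.q := by exact_mod_cast ha.modulus_pos
      apply Metric.closedBall_subset_closedBall'
      rw [dist_comm, Real.dist_eq]
      have h1 : η / a.q ≤ 1 / a.q := by gcongr
      have h2 : 2 / (a.q : ℝ) = 1 / a.q + 1 / a.q := by ring
      linarith [ha.near]
    · intro a ha
      have hq : (0 : ℝ) < a.q := by exact_mod_cast ha.modulus_pos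
      rw [hvolball, Real.volume_closedBall, ENNReal.ofNNReal_toNNReal,
        ← ENNReal.ofReal_mul (by positivity)]
      refine ENNReal.ofReal_le_ofReal (le_of_eq ?_)
      field_simp
      norm_num
    · intro a ha
      have hq : (0 : ℝ) < a.q := by exact_mod_cast ha.modulus_pos
      have : 0 < η / a.q := by positivity
      exact (Metric.nonempty_ball.2 this).mono Metric.ball_subset_interior_closedBall
    · intro x hx e he
      obtain ⟨d, hd, hdI⟩ := Metric.mem_nhds_iff.1 (mem_interior_iff_mem_nhds.1 (hEI hx))
      have hlim : ∀ c : ℝ, Tendsto (fun q : ℕ => c / (q : ℝ)) atTop (nhds 0) :=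
        fun c => tendsto_const_div_atTop_nhds_zero_nat c
      have hfar : ∀ᶠ q : ℕ in atTop, ∀ k ∈ Finset.Ioo (-(L : ℤ)) L,
          1 / (q : ℝ) < distZ (x - k * α) := by
        rw [Filter.eventually_all_finset]
        intro k _
        refine (hlim 1).eventually_lt_const (lt_of_le_of_ne (distZ_nonneg _) fun h => ?_)
        obtain ⟨m, hm⟩ := (distZ_eq_zero_iff _).1 h.symm
        exact hE x hx k m (by linarith)
      obtain ⟨q₀, hq₀⟩ := eventually_atTop.1 ((hfar.and ((hlim 2).eventually_lt_const hd)).and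
        ((hlim 2).eventually_lt_const he))
      obtain ⟨q, hqQ, hqpos, happ, hsep⟩ := exists_modulus hα (max q₀ Q)
      obtain ⟨⟨hf, hd'⟩, he'⟩ := hq₀ q ((le_max_left _ _).trans hqQ)
      obtain ⟨k, m, hk, hkm⟩ := happ x
      refine ⟨⟨x, q, k, m⟩, ⟨hx, (le_max_right _ _).trans hqQ, hqpos, hsep, hk, hkm, ?_, ?_⟩,
        he'.le, rfl⟩
      · refine subset_trans (Metric.closedBall_subset_ball' ?_) hdI
        rw [dist_comm, Real.dist_eq]
        have hq : (0 : ℝ) < q := by exact_mod_cast hqpos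
        have h1 : η / q ≤ 1 / q := by gcongr
        have h2 : 2 / (q : ℝ) = 1 / q + 1 / q := by ring
        change η / q + |x - (k * α + m)| < d
        linarith
      · by_contra! h
        have hkL : |k| < (L : ℤ) := by exact_mod_cast h
        have := hf k (Finset.mem_Ioo.2 (abs_lt.1 hkL))
        have h2 := distZ_le_abs_sub_int (x - k * α) m
        rw [sub_sub] at h2
        linarith
  have h1 : volume E ≤ ∑' a : u, volume ((a : Seed).ball α η) := by
    refine le_trans ?_ (measure_biUnion_le volume huc _)
    refine (measure_mono (subset_sdiff_union E (⋃ a ∈ u, ball α η a))).trans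
      ((measure_union_le _ _).trans ?_)
    rw [hu0, zero_add]
  have h2 := hvol.trans_le h1
  rw [ENNReal.tsum_eq_iSup_sum, lt_iSup_iff] at h2
  obtain ⟨s, hs⟩ := h2
  refine ⟨s.map (Function.Embedding.subtype _), fun a ha => ?_, fun a ha b hb hab => ?_, ?_⟩
  · obtain ⟨b, -, rfl⟩ := Finset.mem_map.1 ha
    exact hut b.2
  · obtain ⟨a', -, rfl⟩ := Finset.mem_map.1 ha
    obtain ⟨b', -, rfl⟩ := Finset.mem_map.1 hb
    exact hud a'.2 b'.2 hab
  · rw [Finset.sum_map]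
    simp only [hvolball, Function.Embedding.subtype_apply] at hs ⊢
    rw [← ENNReal.ofReal_sum_of_nonneg (fun a _ => by positivity)] at hs
    exact lt_of_not_ge fun h => hs.not_ge (ENNReal.ofReal_le_ofReal h)

end Seed

theorem lt_volume_sdiff {α B γ ℓ a : ℝ} {K L : ℕ} (hℓ : 0 < ℓ) (hI : Icc a (a + ℓ) ⊆ Icc 0 1)
    (hB : volume (Icc 0 1 ∩ resonantSet α B K) ≤ ENNReal.ofReal (ℓ / 4))
    (hγ : volume (Icc 0 1 ∩ resonantSet α γ L) ≤ ENNReal.ofReal (ℓ / 4)) :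
    ENNReal.ofReal (ℓ / 4) < volume (Ioo a (a + ℓ) \ (resonantSet α B K ∪ resonantSet α γ L ∪
      range fun p : ℤ × ℤ => (p.1 * α + p.2 : ℝ))) := by
  set R : Set ℝ := range fun p : ℤ × ℤ => (p.1 * α + p.2 : ℝ)
  set E := Ioo a (a + ℓ) \ (resonantSet α B K ∪ resonantSet α γ L ∪ R)
  have hR : volume R = 0 := (countable_range _).measure_zero _
  have hsub : Ioo a (a + ℓ) ⊆
      E ∪ ((Icc 0 1 ∩ resonantSet α B K) ∪ ((Icc 0 1 ∩ resonantSet α γ L) ∪ R)) := by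
    intro y hy
    have hy1 := hI (Ioo_subset_Icc_self hy)
    by_cases h : y ∈ resonantSet α B K ∪ resonantSet α γ L ∪ R
    · rcases h with (h | h) | h
      · exact Or.inr (Or.inl ⟨hy1, h⟩)
      · exact Or.inr (Or.inr (Or.inl ⟨hy1, h⟩))
      · exact Or.inr (Or.inr (Or.inr h))
    · exact Or.inl ⟨hy, h⟩
  have h1 : ENNReal.ofReal ℓ ≤
      volume E + (ENNReal.ofReal (ℓ / 4) + (ENNReal.ofReal (ℓ / 4) + 0)) := by
    calc ENNReal.ofReal ℓ = volume (Ioo a (a + ℓ)) := by rw [Real.volume_Ioo, add_sub_cancel_left]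
      _ ≤ _ := measure_mono hsub
      _ ≤ _ := (measure_union_le _ _).trans (add_le_add le_rfl ((measure_union_le _ _).trans
        (add_le_add hB ((measure_union_le _ _).trans (add_le_add hγ hR.le)))))
  by_contra! h
  have h2 := h1.trans (add_le_add h le_rfl)
  rw [add_zero, ← ENNReal.ofReal_add (by positivity) (by positivity),
    ← ENNReal.ofReal_add (by positivity) (by positivity),
    ENNReal.ofReal_le_ofReal_iff (by positivity)] at h2
  linarith

theorem exists_children {α A B B' ε : ℝ} (hα : Irrational α) (hA : 0 < A) (hAB' : A < B')
    (hB : 0 < B) (hε : 0 < ε) (N : ℕ) {v : CantorNode} (hv : v.IsGood α B) :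
    ∃ F : Finset CantorNode, (F : Set CantorNode).PairwiseDisjoint hull ∧
      ∑ u ∈ F, u.mass = v.mass ∧ ∀ u ∈ F, u.IsChild α A B B' ε N v := by
  obtain ⟨hℓ, -, hw, hI, hvolB⟩ := hv
  set γ := min A B / 4 with hγdef
  have hγ : 0 < γ := by have := lt_min hA hB; positivity
  have hγA : 4 * γ ≤ A := by rw [hγdef]; linarith [min_le_left A B]
  have hγB : 4 * γ ≤ B := by rw [hγdef]; linarith [min_le_right A B]
  obtain ⟨C', -, hC'⟩ := exists_volume_resonantSet_le α (hA.trans hAB')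
  obtain ⟨Cγ, -, hCγ⟩ := exists_volume_resonantSet_le α hγ
  obtain ⟨L₁, hL₁⟩ := exists_threshold (C := C') hA hAB' N
  obtain ⟨L, hLL₁, hLγ⟩ : ∃ L : ℕ, L₁ ≤ L ∧ Cγ * Real.exp (-(γ * L)) ≤ v.len / 4 := by
    have := (tendsto_exp_neg_mul_nat hγ).const_mul Cγ
    rw [mul_zero] at this
    exact ((eventually_ge_atTop L₁).and ((this.eventually_lt_const
      (by positivity : 0 < v.len / 4)).mono fun _ h => h.le)).exists
  set η := min 1 (ε * v.len / (4 * v.mass * A)) with hηdef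
  have hη : 0 < η := lt_min one_pos (by positivity)
  have hη1 : η ≤ 1 := min_le_left _ _
  have hη2 : 4 * v.mass * A * η ≤ ε * v.len := by
    have := min_le_right 1 (ε * v.len / (4 * v.mass * A))
    rw [← hηdef, le_div_iff₀ (by positivity)] at this
    linarith
  obtain ⟨Q, hQ⟩ : ∃ Q : ℕ, ∀ q : ℕ, Q ≤ q → 13 ≤ q ∧ 4 / η ≤ q ∧
      3 / (q : ℝ) ≤ Real.exp (-(B * L)) := by
    have h1 : ∀ᶠ q : ℕ in atTop, 4 / η ≤ (q : ℝ) :=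
      tendsto_natCast_atTop_atTop.eventually_ge_atTop _
    have h2 := (tendsto_const_div_atTop_nhds_zero_nat (3 : ℝ)).eventually_lt_const
      (Real.exp_pos (-(B * L)))
    exact eventually_atTop.1 ((eventually_ge_atTop 13).and
      (h1.and (h2.mono fun _ h => h.le)))
  set E := Ioo v.left (v.left + v.len) \ (resonantSet α B v.order ∪ resonantSet α γ L ∪
    range fun p : ℤ × ℤ => (p.1 * α + p.2 : ℝ)) with hE
  obtain ⟨s, hs, hsd, hsum⟩ := Seed.exists_finset_admissible (E := E) (I := v.core) hα hη hη1 Q L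
    (by rw [core, interior_Icc]; exact sdiff_subset)
    (fun x hx k m h => hx.2 (Or.inr ⟨(k, m), h.symm⟩))
    (lt_volume_sdiff hℓ hI hvolB ((hCγ L).trans (ENNReal.ofReal_le_ofReal hLγ)))
  have hxB : ∀ a ∈ s, a.x ∉ resonantSet α B v.order := fun a ha h =>
    (hs a ha).mem.2 (Or.inl (Or.inl h))
  have hxγ : ∀ a ∈ s, a.x ∉ resonantSet α γ L := fun a ha h =>
    (hs a ha).mem.2 (Or.inl (Or.inr h))
  have hqpos : ∀ a ∈ s, (0 : ℝ) < a.q := fun a ha => by exact_mod_cast (hs a ha).modulus_pos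
  set total := ∑ a ∈ s, η / (2 * (a.q : ℝ)) with htotal
  have htot : v.len / 16 < total := by
    have : ∑ a ∈ s, 2 * (η / (a.q : ℝ)) = 4 * total := by
      rw [htotal, Finset.mul_sum]
      exact Finset.sum_congr rfl fun a _ => by ring
    linarith
  have htotpos : 0 < total := by linarith
  have hsmall : ∀ a ∈ s, 2 * Real.exp (-(A * |(a.k : ℝ)|)) ≤ η / (2 * a.q) := by
    intro a ha
    obtain ⟨h13, hq4, -⟩ := hQ a.q (hs a ha).le_modulus
    have hq13 : (13 : ℝ) ≤ a.q := by exact_mod_cast h13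
    have hq := hqpos a ha
    have h1 := exp_le_one_div_pow_four hγA (hs a ha).le_order (hs a ha).near (hxγ a ha)
    have h2 : 2 * (1 / (a.q : ℝ) ^ 4) ≤ η / (2 * a.q) := by
      rw [div_le_iff₀ hη] at hq4
      rw [mul_one_div, div_le_div_iff₀ (by positivity) (by positivity)]
      have h3 : (a.q : ℝ) ^ 2 ≤ (a.q : ℝ) ^ 4 := pow_le_pow_right₀ (by linarith) (by norm_num)
      nlinarith
    linarith
  let nd : Seed → CantorNode := Seed.node α A η (v.mass / total)
  have hhull : ∀ a ∈ s, (nd a).hull ⊆ a.ball α η := fun a ha =>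
    Seed.hull_node_subset (hsmall a ha)
  have hlen : ∀ a : Seed, 0 < (nd a).len := fun a => Real.exp_pos _
  have hlb : ∀ a ∈ s, (nd a).len ≤ (nd a).buffer := fun a ha => by
    have h1 := hsmall a ha
    have h2 := hlen a
    change Real.exp (-(A * |(a.k : ℝ)|)) ≤ η / (2 * a.q)
    change 0 < Real.exp (-(A * |(a.k : ℝ)|)) at h2
    linarith
  have hinj : InjOn nd s := by
    intro a ha b hb hab
    by_contra hne
    obtain ⟨y, hy⟩ := hull_nonempty (hlen a) (hlb a ha)
    exact Set.disjoint_left.1 (hsd ha hb hne) (hhull a ha hy) (hhull b hb (hab ▸ hy))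
  refine ⟨s.image nd, ?_, ?_, ?_⟩
  · rw [Finset.coe_image]
    rintro _ ⟨a, ha, rfl⟩ _ ⟨b, hb, rfl⟩ hab
    exact (hsd ha hb fun h => hab (h ▸ rfl)).mono (hhull a ha) (hhull b hb)
  · rw [Finset.sum_image hinj]
    change ∑ a ∈ s, v.mass / total * (η / (2 * (a.q : ℝ))) = v.mass
    rw [← Finset.mul_sum, ← htotal, div_mul_cancel₀ _ htotpos.ne']
  · intro u hu
    obtain ⟨a, ha, rfl⟩ := Finset.mem_image.1 hu
    have hadm := hs a ha
    have hq := hqpos a ha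
    obtain ⟨h13, hq4, hqL⟩ := hQ a.q hadm.le_modulus
    have hord : ((nd a).order : ℝ) = |(a.k : ℝ)| := by
      change ((a.k.natAbs : ℕ) : ℝ) = _
      rw [Nat.cast_natAbs, Int.cast_abs]
    have hordZ : ((nd a).order : ℤ) = |a.k| := by
      change ((a.k.natAbs : ℕ) : ℤ) = _
      rw [Int.natCast_natAbs]
    have hL₁k : L₁ ≤ (nd a).order := by
      refine hLL₁.trans ?_
      have := hadm.le_order
      rw [← hord] at this
      exact_mod_cast this
    obtain ⟨hNk, hNA, hCk⟩ := hL₁ _ hL₁k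
    have hleneq : (nd a).len = Real.exp (-(A * (nd a).order)) := by rw [hord]; rfl
    have hsub : (nd a).hull ⊆ v.core := (hhull a ha).trans hadm.ball_subset
    have hcore : (nd a).core ⊆ (nd a).hull := by
      have := hlen a
      have := hlb a ha
      apply Icc_subset_Icc <;> linarith
    have hmass : (nd a).mass ≤ 16 * v.mass * (nd a).buffer / v.len := by
      have h1 : v.mass / total ≤ 16 * v.mass / v.len := by
        rw [div_le_div_iff₀ htotpos hℓ]
        nlinarith
      have h2 : 0 < η / (2 * (a.q : ℝ)) := by positivity
      calc (nd a).mass = v.mass / total * (η / (2 * (a.q : ℝ))) := rfl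
        _ ≤ 16 * v.mass / v.len * (η / (2 * (a.q : ℝ))) := by gcongr
        _ = 16 * v.mass * (nd a).buffer / v.len := by
          change _ = 16 * v.mass * (η / (2 * (a.q : ℝ))) / v.len
          ring
    refine ⟨⟨hlen a, hlb a ha, ?_, (hcore.trans hsub).trans hI, ?_⟩, hsub, hmass, hleneq, hNk,
      hNA, ?_, fun y hy => ?_⟩
    · change 0 < v.mass / total * (η / (2 * (a.q : ℝ)))
      positivity
    · refine (hC' _).trans (ENNReal.ofReal_le_ofReal ?_)
      rwa [hleneq]
    · have hk : 2 * |(a.k : ℝ)| ≤ a.q := by exact_mod_cast hadm.two_mul_le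
      rw [hord]
      calc (nd a).mass * (A * |(a.k : ℝ)|)
          ≤ 16 * v.mass * (η / (2 * (a.q : ℝ))) / v.len * (A * (a.q / 2)) := by
            have : |(a.k : ℝ)| ≤ a.q / 2 := by linarith
            exact mul_le_mul hmass (by gcongr) (by positivity) (by positivity)
        _ = 4 * v.mass * A * η / v.len := by field_simp; norm_num
        _ ≤ ε := by rwa [div_le_iff₀ hℓ]
    · have hy1 : a.k * α + a.m + Real.exp (-(A * |(a.k : ℝ)|)) ≤ y := hy.1
      have hy2 : y ≤ a.k * α + a.m + Real.exp (-(A * |(a.k : ℝ)|)) +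
        Real.exp (-(A * |(a.k : ℝ)|)) := hy.2
      have hpos := Real.exp_pos (-(A * |(a.k : ℝ)|))
      obtain ⟨h1, h2, h3⟩ := separation_of_near (y := y) hγ hγA hγB h13 hqL hadm.separation
        hadm.two_mul_le hadm.le_order hadm.near (hxB a ha) (hxγ a ha)
        (abs_le.2 ⟨by linarith, by linarith⟩)
      rw [hordZ]
      exact ⟨⟨a.k, rfl, h1⟩, h2, fun j hj => h3 j (by exact_mod_cast hj)⟩

theorem core_subset_interior_hull {v : CantorNode} (h : 0 < v.buffer) :
    v.core ⊆ interior v.hull := by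
  rw [hull, interior_Icc]
  exact fun y hy => ⟨by linarith [hy.1], by linarith [hy.2]⟩

theorem IsGood.buffer_pos {α B : ℝ} {v : CantorNode} (h : v.IsGood α B) : 0 < v.buffer :=
  h.len_pos.trans_le h.len_le_buffer

theorem IsGood.core_subset_hull {α B : ℝ} {v : CantorNode} (h : v.IsGood α B) :
    v.core ⊆ v.hull :=
  (core_subset_interior_hull h.buffer_pos).trans interior_subset

theorem exists_root (α : ℝ) {B : ℝ} (hB : 0 < B) :
    ∃ v : CantorNode, v.IsGood α B ∧ v.len = 1 / 4 ∧ v.mass = 1 := by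
  obtain ⟨C, -, hC⟩ := exists_volume_resonantSet_le α hB
  have := (tendsto_exp_neg_mul_nat hB).const_mul C
  rw [mul_zero] at this
  obtain ⟨K, hK⟩ := (this.eventually_lt_const (by norm_num : (0 : ℝ) < 1 / 16)).exists
  refine ⟨⟨1 / 4, 1 / 4, 1 / 4, 1, K⟩, ⟨by norm_num, le_rfl, one_pos, ?_, ?_⟩, rfl, rfl⟩
  · exact Icc_subset_Icc (by norm_num) (by norm_num)
  · exact (hC K).trans (ENNReal.ofReal_le_ofReal (by norm_num at hK ⊢; exact hK.le))

end CantorNode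

/-- A tree of nodes whose `n`-th level is adapted to the resonance exponents `A n < B n`. -/
structure CantorTree (α : ℝ) (A B : ℕ → ℝ) (ε : ℝ) where
  level : ℕ → Finset CantorNode
  children : ℕ → CantorNode → Finset CantorNode
  root : CantorNode
  level_zero : level 0 = {root}
  level_succ : ∀ n, level (n + 1) = (level n).biUnion (children n)
  root_isGood : root.IsGood α (B 0)
  root_len : root.len = 1 / 4
  root_mass : root.mass = 1
  sum_mass : ∀ n, ∀ v ∈ level n, ∑ u ∈ children n v, u.mass = v.mass
  pairwiseDisjoint_children : ∀ n, ∀ v ∈ level n,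
    (children n v : Set CantorNode).PairwiseDisjoint CantorNode.hull
  isChild : ∀ n, ∀ v ∈ level n, ∀ u ∈ children n v,
    u.IsChild α (A (n + 1)) (B n) (B (n + 1)) ε (n + 1) v

namespace CantorTree

variable {α ε : ℝ} {A B : ℕ → ℝ}

theorem nonempty (hα : Irrational α) (hA : ∀ n, 0 < A n) (hAB : ∀ n, A n < B n) (hε : 0 < ε) :
    Nonempty (CantorTree α A B ε) := by
  have hB : ∀ n, 0 < B n := fun n => (hA n).trans (hAB n)
  obtain ⟨v₀, hv₀, hlen, hmass⟩ := CantorNode.exists_root α (hB 0)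
  choose! F hFd hFm hF using fun (n : ℕ) (v : CantorNode) (hv : v.IsGood α (B n)) =>
    CantorNode.exists_children hα (hA (n + 1)) (hAB (n + 1)) (hB n) hε (n + 1) hv
  let level : ℕ → Finset CantorNode := fun n => n.rec {v₀} fun n s => s.biUnion (F n)
  have hgood : ∀ n, ∀ v ∈ level n, v.IsGood α (B n) := by
    intro n
    induction n with
    | zero => exact fun v hv => Finset.mem_singleton.1 hv ▸ hv₀
    | succ n ih =>
      intro u hu
      obtain ⟨v, hv, huv⟩ := Finset.mem_biUnion.1 hu
      exact (hF n v (ih v hv) u huv).isGood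
  exact ⟨⟨level, F, v₀, rfl, fun _ => rfl, hv₀, hlen, hmass, fun n v hv => hFm n v (hgood n v hv),
    fun n v hv => hFd n v (hgood n v hv), fun n v hv => hF n v (hgood n v hv)⟩⟩

variable (T : CantorTree α A B ε)

theorem isGood (n : ℕ) : ∀ v ∈ T.level n, v.IsGood α (B n) := by
  cases n with
  | zero =>
    intro v hv
    rw [T.level_zero, Finset.mem_singleton] at hv
    exact hv ▸ T.root_isGood
  | succ n =>
    intro u hu
    rw [T.level_succ, Finset.mem_biUnion] at hu
    obtain ⟨v, hv, huv⟩ := hu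
    exact (T.isChild n v hv u huv).isGood

theorem pairwiseDisjoint_level (n : ℕ) :
    (T.level n : Set CantorNode).PairwiseDisjoint CantorNode.hull :=
  pairwiseDisjoint_of_tree T.level_zero T.level_succ
    (fun n v hv => (T.isGood n v hv).core_subset_hull)
    (fun n v hv u hu => (T.isChild n v hv u hu).hull_subset) T.pairwiseDisjoint_children n

def limitSet : Set ℝ := ⋂ n, ⋃ v ∈ T.level n, v.core

theorem measurableSet_limitSet : MeasurableSet T.limitSet :=
  MeasurableSet.iInter fun _ => Finset.measurableSet_biUnion _ fun _ _ => measurableSet_Icc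

theorem exists_measure : ∃ μ : Measure ℝ, IsProbabilityMeasure μ ∧ μ T.limitSet = 1 ∧
    ∀ n, ∀ v ∈ T.level n, μ v.core ≤ ENNReal.ofReal v.mass := by
  obtain ⟨μ, hμ, h1, h2⟩ := exists_probabilityMeasure_of_tree
    (w := fun v : CantorNode => ENNReal.ofReal v.mass) T.level_zero (by simp [T.root_mass])
    T.root_isGood.core_subset T.level_succ (fun _ => isClosed_Icc)
    (fun n v hv => nonempty_Icc.2 (by linarith [(T.isGood n v hv).len_pos]))
    (fun n v hv => CantorNode.core_subset_interior_hull (T.isGood n v hv).buffer_pos)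
    (fun n v hv u hu => (T.isChild n v hv u hu).hull_subset) T.pairwiseDisjoint_children
    (fun n v hv => by
      rw [← T.sum_mass n v hv, ENNReal.ofReal_sum_of_nonneg fun u hu =>
        (T.isChild n v hv u hu).isGood.mass_pos.le])
  refine ⟨μ, hμ, ?_, h2⟩
  rw [← prob_compl_eq_zero_iff T.measurableSet_limitSet, limitSet, compl_iInter,
    measure_iUnion_null_iff]
  intro n
  have hm : MeasurableSet (⋃ v ∈ T.level n, v.core) :=
    Finset.measurableSet_biUnion _ fun _ _ => measurableSet_Icc
  rw [prob_compl_eq_zero_iff hm, h1]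

/-- `v` is the sequence of nodes containing `x`. -/
structure IsBranch (x : ℝ) (v : ℕ → CantorNode) : Prop where
  zero : v 0 = T.root
  mem_level : ∀ n, v n ∈ T.level n
  mem_core : ∀ n, x ∈ (v n).core
  mem_children : ∀ n, v (n + 1) ∈ T.children n (v n)

theorem exists_isBranch {x : ℝ} (hx : x ∈ T.limitSet) : ∃ v, T.IsBranch x v := by
  have h : ∀ n, ∃ v ∈ T.level n, x ∈ v.core := fun n => by
    simpa using mem_iInter.1 hx n
  choose v hv hxv using h
  refine ⟨v, ⟨by simpa [T.level_zero] using hv 0, hv, hxv, fun n => ?_⟩⟩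
  have hn := hv (n + 1)
  rw [T.level_succ, Finset.mem_biUnion] at hn
  obtain ⟨w, hw, hvw⟩ := hn
  have hxw : x ∈ w.core := (T.isChild n w hw _ hvw).hull_subset
    ((T.isGood _ _ (hv (n + 1))).core_subset_hull (hxv (n + 1)))
  have hwv : w = v n := by
    by_contra hne
    exact Set.disjoint_left.1 (T.pairwiseDisjoint_level n hw (hv n) hne)
      ((T.isGood n w hw).core_subset_hull hxw) ((T.isGood n _ (hv n)).core_subset_hull (hxv n))
  exact hwv ▸ hvw

variable {T}

theorem IsBranch.isChild {x : ℝ} {v : ℕ → CantorNode} (h : T.IsBranch x v) (n : ℕ) :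
    (v (n + 1)).IsChild α (A (n + 1)) (B n) (B (n + 1)) ε (n + 1) (v n) :=
  T.isChild n _ (h.mem_level n) _ (h.mem_children n)

theorem IsBranch.distZ_pos {x : ℝ} {v : ℕ → CantorNode} (h : T.IsBranch x v) (j : ℤ) :
    0 < distZ (x - j * α) := by
  have hc := h.isChild j.natAbs
  refine (hc.isResonant x (h.mem_core _)).2.1 j ?_
  have := hc.le_order
  rw [Int.abs_eq_natAbs]
  omega

theorem IsBranch.limsup_le {x : ℝ} {v : ℕ → CantorNode} (h : T.IsBranch x v) {δ : ℝ≥0∞}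
    (hB : Tendsto (fun n => ENNReal.ofReal (B n)) atTop (nhds δ)) :
    limsup (fun k : ℤ => ENNReal.ofReal (-Real.log (distZ (x - (k : ℝ) * α)) / |(k : ℝ)|))
      cofinite ≤ δ := by
  refine le_of_forall_gt_imp_ge_of_dense fun b hb => ?_
  obtain ⟨n₀, hn₀⟩ := eventually_atTop.1 (hB.eventually_lt_const hb)
  refine limsup_le_of_le (h := ?_)
  rw [eventually_cofinite]
  refine (Set.finite_Ioo (-((v n₀).order : ℤ)) (v n₀).order).subset fun j hj => ?_
  by_contra hlt
  rw [mem_Ioo, ← abs_lt, not_lt] at hlt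
  refine hj ?_
  rcases eq_or_ne j 0 with rfl | hj0
  · simp
  have hex : ∃ i, |j| < ((v (n₀ + i)).order : ℤ) := by
    refine ⟨j.natAbs + 1, ?_⟩
    have := (h.isChild (n₀ + j.natAbs)).le_order
    rw [← add_assoc, Int.abs_eq_natAbs]
    omega
  have hi := Nat.find_spec hex
  obtain ⟨i, hi'⟩ : ∃ i, Nat.find hex = i + 1 := by
    refine Nat.exists_eq_succ_of_ne_zero fun h0 => ?_
    rw [h0, add_zero] at hi
    exact hi.not_ge hlt
  have hlow : ((v (n₀ + i)).order : ℤ) ≤ |j| :=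
    not_lt.1 (Nat.find_min hex (by omega : i < Nat.find hex))
  rw [hi', ← add_assoc] at hi
  have hexp := ((h.isChild (n₀ + i)).isResonant x (h.mem_core _)).2.2 j hlow hi
  refine le_trans (ENNReal.ofReal_le_ofReal ?_) (hn₀ (n₀ + i) (by omega)).le
  rw [div_le_iff₀ (abs_pos.2 (Int.cast_ne_zero.2 hj0)), neg_le, ← Real.exp_le_exp,
    Real.exp_log (h.distZ_pos j)]
  exact hexp

theorem IsBranch.le_limsup {x : ℝ} {v : ℕ → CantorNode} (h : T.IsBranch x v) {δ : ℝ≥0∞}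
    (hA : Tendsto (fun n => ENNReal.ofReal (A n)) atTop (nhds δ)) :
    δ ≤ limsup (fun k : ℤ =>
      ENNReal.ofReal (-Real.log (distZ (x - (k : ℝ) * α)) / |(k : ℝ)|)) cofinite := by
  refine le_of_forall_lt_imp_le_of_dense fun a ha => ?_
  have hlog : Tendsto (fun n : ℕ => ENNReal.ofReal (Real.log 2 / n)) atTop (nhds 0) := by
    simpa using ENNReal.tendsto_ofReal (tendsto_const_div_atTop_nhds_zero_nat (Real.log 2))
  have hlim := ENNReal.Tendsto.sub hA hlog (Or.inr ENNReal.zero_ne_top)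
  rw [tsub_zero] at hlim
  choose k hk hkx using fun n => ((h.isChild n).isResonant x (h.mem_core _)).1
  have htend : Tendsto k atTop cofinite := by
    intro s hs
    obtain ⟨M, hM⟩ := ((mem_cofinite.1 hs).image Int.natAbs).bddAbove
    refine Filter.mem_map.2 (mem_of_superset (Ici_mem_atTop M) fun n hn => ?_)
    by_contra hks
    have h1 : (k n).natAbs ≤ M := hM ⟨k n, hks, rfl⟩
    have h2 := (h.isChild n).le_order
    have h3 := hk n
    have h4 : M ≤ n := hn
    rw [Int.abs_eq_natAbs] at h3
    omega
  refine le_limsup_of_frequently_le (htend.frequently (Eventually.frequently ?_))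
  filter_upwards [(tendsto_add_atTop_nat 1).eventually (hlim.eventually_const_lt ha)] with n hn
  refine hn.le.trans ?_
  have hc := h.isChild n
  have hkR : |(k n : ℝ)| = (v (n + 1)).order := by exact_mod_cast hk n
  have hord : ((n + 1 : ℕ) : ℝ) ≤ (v (n + 1)).order := by exact_mod_cast hc.le_order
  have hn1 : (0 : ℝ) < ((n + 1 : ℕ) : ℝ) := by positivity
  have hlog2 : 0 ≤ Real.log 2 := Real.log_nonneg one_le_two
  rw [← ENNReal.ofReal_sub _ (by positivity), hkR]
  refine ENNReal.ofReal_le_ofReal ?_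
  have h1 := Real.log_le_log (h.distZ_pos (k n)) (hkx n)
  rw [hc.len_eq, Real.log_mul two_ne_zero (Real.exp_ne_zero _), Real.log_exp] at h1
  rw [le_div_iff₀ (hn1.trans_le hord), sub_mul]
  have h2 : Real.log 2 ≤ Real.log 2 / (n + 1 : ℕ) * (v (n + 1)).order := by
    rw [div_mul_eq_mul_div, le_div_iff₀ hn1]
    gcongr
  linarith

theorem limitSet_subset_resSet {δ : ℝ≥0∞}
    (hA : Tendsto (fun n => ENNReal.ofReal (A n)) atTop (nhds δ))
    (hB : Tendsto (fun n => ENNReal.ofReal (B n)) atTop (nhds δ)) :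
    T.limitSet ⊆ resSet α δ := by
  intro x hx
  obtain ⟨v, hv⟩ := T.exists_isBranch hx
  refine ⟨(T.isGood 0 _ (hv.mem_level 0)).core_subset (hv.mem_core 0), ?_⟩
  rw [resStrength, if_neg]
  · exact le_antisymm (hv.limsup_le hB) (hv.le_limsup hA)
  · rintro ⟨k, m, hkm⟩
    exact (hv.distZ_pos k).ne' ((distZ_eq_zero_iff _).2 ⟨m, by linarith⟩)

end CantorTree

theorem mul_neg_log_le {r s : ℝ} (hr : 0 < r) (hrs : r ≤ s) (hs : s ≤ Real.exp (-1)) :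
    r * -Real.log r ≤ s * -Real.log s := by
  have hs0 : 0 < s := hr.trans_le hrs
  have h1 : Real.exp 1 ≤ s⁻¹ := by
    rw [le_inv_comm₀ (Real.exp_pos _) hs0, ← Real.exp_neg]; exact hs
  have h2 : s⁻¹ ≤ r⁻¹ := inv_anti₀ hr hrs
  have := Real.log_div_self_antitoneOn h1 (h1.trans h2) h2
  simpa only [Real.log_inv, div_inv_eq_mul, mul_comm] using this

theorem exists_radius {c ε : ℝ} (hc : 0 < c) (hε : 0 < ε) :
    ∃ r₀, 0 < r₀ ∧ r₀ < 1 / 4 ∧ ∀ r, 0 < r → r ≤ r₀ → c * (r * -Real.log r) ≤ ε := by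
  have h := (Real.continuous_mul_log.tendsto 0).neg
  simp only [zero_mul, neg_zero] at h
  obtain ⟨d, hd, h⟩ := Metric.eventually_nhds_iff.1
    (h.eventually_lt_const (by positivity : 0 < ε / c))
  refine ⟨min d (1 / 4) / 2, by positivity, ?_, fun r hr hr' => ?_⟩
  · linarith [min_le_right d (1 / 4)]
  · have h1 : dist r 0 < d := by
      rw [Real.dist_eq, sub_zero, abs_of_pos hr]
      linarith [min_le_left d (1 / 4)]
    have h2 := h h1
    rw [lt_div_iff₀ hc] at h2
    linarith

namespace CantorNode

theorem sum_buffer_le {G : Finset CantorNode} (hG : (G : Set CantorNode).PairwiseDisjoint hull)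
    {a b : ℝ} (hab : a ≤ b) (hsub : ∀ w ∈ G, w.hull ⊆ Icc a b) (hlen : ∀ w ∈ G, 0 < w.len)
    (hbuf : ∀ w ∈ G, 0 < w.buffer) : 2 * ∑ w ∈ G, w.buffer ≤ b - a := by
  have h1 : ∀ w ∈ G, ENNReal.ofReal (2 * w.buffer) ≤ volume w.hull := fun w hw => by
    rw [hull, Real.volume_Icc]
    exact ENNReal.ofReal_le_ofReal (by linarith [hlen w hw])
  have h2 : ENNReal.ofReal (2 * ∑ w ∈ G, w.buffer) ≤ ENNReal.ofReal (b - a) := by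
    rw [Finset.mul_sum, ENNReal.ofReal_sum_of_nonneg fun w hw => by linarith [hbuf w hw],
      ← Real.volume_Icc]
    exact (Finset.sum_le_sum h1).trans ((measure_biUnion_finset hG
      fun _ _ => measurableSet_Icc).symm.trans_le (measure_mono (iUnion₂_subset hsub)))
  exact (ENNReal.ofReal_le_ofReal_iff (sub_nonneg.2 hab)).1 h2

/-- If the hull of `u` contains `x`, then any node with hull disjoint from it whose core meets
`[x - r, x + r]` lies in `[x - 3 * r, x + 3 * r]`. -/
theorem hull_subset_of_disjoint {u w : CantorNode} {x y r : ℝ} (hw : 0 < w.len)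
    (hwb : w.len ≤ w.buffer) (hd : Disjoint u.hull w.hull) (hx : x ∈ u.hull) (hy : y ∈ w.core)
    (hxy : y ∈ Icc (x - r) (x + r)) : w.hull ⊆ Icc (x - 3 * r) (x + 3 * r) := by
  have hxw : ¬ (w.left - w.buffer ≤ x ∧ x ≤ w.left + w.len + w.buffer) :=
    Set.disjoint_left.1 hd hx
  obtain ⟨h1, h2⟩ := hy
  obtain ⟨h3, h4⟩ := hxy
  rw [not_and_or, not_le, not_le] at hxw
  rcases hxw with h | h <;> apply Icc_subset_Icc <;> linarith

theorem hull_subset_of_mem_core {u : CantorNode} {x r : ℝ} (hr : 0 < r) (hx : x ∈ u.core)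
    (hu : u.len ≤ r) (hb : u.buffer ≤ r) : u.hull ⊆ Icc (x - 3 * r) (x + 3 * r) := by
  obtain ⟨h1, h2⟩ := hx
  apply Icc_subset_Icc <;> linarith

theorem mem_hull_of_mem_core {u : CantorNode} {x y r : ℝ} (hx : x ∈ u.core) (hb : r ≤ u.buffer)
    (hxy : y ∈ Icc (x - r) (x + r)) : y ∈ u.hull := by
  obtain ⟨h1, h2⟩ := hx
  obtain ⟨h3, h4⟩ := hxy
  exact ⟨by linarith, by linarith⟩

theorem IsChild.len_le {α A B B' ε : ℝ} {N : ℕ} {u v : CantorNode}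
    (h : u.IsChild α A B B' ε N v) : u.len ≤ Real.exp (-(N : ℝ)) := by
  rw [h.len_eq]
  exact Real.exp_le_exp.2 (neg_le_neg h.le_mul_order)

theorem IsChild.mass_mul_log_le {α A B B' ε : ℝ} {N : ℕ} {u v : CantorNode}
    (h : u.IsChild α A B B' ε N v) : u.mass * -Real.log u.len ≤ ε := by
  rw [h.len_eq, Real.log_exp, neg_neg]
  exact h.mass_mul_le

end CantorNode

namespace CantorTree

variable {α ε : ℝ} {A B : ℕ → ℝ} {T : CantorTree α A B (ε / 48)}

theorem IsBranch.mass_mul_le {x : ℝ} {v : ℕ → CantorNode} (h : T.IsBranch x v) {r₀ : ℝ}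
    (hr₀ : ∀ r, 0 < r → r ≤ r₀ → 192 * (r * -Real.log r) ≤ ε) (n : ℕ) {r : ℝ} (hr : 0 < r)
    (hrr : r ≤ r₀) (hrl : r ≤ (v n).len) :
    48 * (v n).mass * (r * -Real.log r) ≤ ε * (v n).len := by
  cases n with
  | zero =>
    rw [h.zero, T.root_mass, T.root_len]
    linarith [hr₀ r hr hrr]
  | succ n =>
    have hc := h.isChild n
    have hm := hc.isGood.mass_pos
    have hl := hc.isGood.len_pos
    have h1 : (v (n + 1)).len ≤ Real.exp (-1) :=
      hc.len_le.trans (Real.exp_le_exp.2 (by push_cast; linarith [n.cast_nonneg (α := ℝ)]))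
    have h2 := mul_neg_log_le hr hrl h1
    calc 48 * (v (n + 1)).mass * (r * -Real.log r)
        ≤ 48 * (v (n + 1)).mass * ((v (n + 1)).len * -Real.log (v (n + 1)).len) := by gcongr
      _ = 48 * (v (n + 1)).len * ((v (n + 1)).mass * -Real.log (v (n + 1)).len) := by ring
      _ ≤ 48 * (v (n + 1)).len * (ε / 48) := by gcongr; exact hc.mass_mul_log_le
      _ = ε * (v (n + 1)).len := by ring

theorem IsBranch.exists_len {x : ℝ} {v : ℕ → CantorNode} (h : T.IsBranch x v) {r : ℝ}
    (hr : 0 < r) (hr' : r ≤ 1 / 4) : ∃ n, (v (n + 1)).len < r ∧ r ≤ (v n).len := by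
  have hex : ∃ n, (v n).len < r := by
    obtain ⟨n, hn⟩ := ((tendsto_exp_neg_mul_nat one_pos).eventually_lt_const hr).exists
    refine ⟨n + 1, ((h.isChild n).len_le.trans (Real.exp_le_exp.2 ?_)).trans_lt hn⟩
    push_cast
    linarith
  have h0 : Nat.find hex ≠ 0 := fun h0 => by
    have := Nat.find_spec hex
    rw [h0, h.zero, T.root_len] at this
    linarith
  obtain ⟨n, hn⟩ := Nat.exists_eq_succ_of_ne_zero h0
  refine ⟨n, ?_, not_lt.1 (Nat.find_min hex (by omega : n < Nat.find hex))⟩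
  have := Nat.find_spec hex
  rwa [hn] at this

/-- Near a point of the limit set only children of a single node are visible. -/
theorem IsBranch.mem_children_of_mem {x : ℝ} {v : ℕ → CantorNode} (h : T.IsBranch x v) {n : ℕ}
    {r : ℝ} (hr : r ≤ (v n).len) {w : CantorNode} (hw : w ∈ T.level (n + 1))
    {y : ℝ} (hy : y ∈ w.core) (hxy : y ∈ Icc (x - r) (x + r)) : w ∈ T.children n (v n) := by
  have hwg := T.isGood _ w hw
  rw [T.level_succ, Finset.mem_biUnion] at hw
  obtain ⟨p, hp, hwp⟩ := hw
  have hvg := T.isGood n _ (h.mem_level n)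
  have hpv : p = v n := by
    by_contra hne
    exact Set.disjoint_left.1 (T.pairwiseDisjoint_level n hp (h.mem_level n) hne)
      ((T.isGood n p hp).core_subset_hull
        ((T.isChild n p hp w hwp).hull_subset (hwg.core_subset_hull hy)))
      (CantorNode.mem_hull_of_mem_core (h.mem_core n) (hr.trans hvg.len_le_buffer) hxy)
  exact hpv ▸ hwp

theorem IsBranch.sum_mass_le {x : ℝ} {v : ℕ → CantorNode} (h : T.IsBranch x v) {r₀ : ℝ}
    (hr₀1 : r₀ < 1 / 4) (hr₀ : ∀ r, 0 < r → r ≤ r₀ → 192 * (r * -Real.log r) ≤ ε) {n : ℕ} {r : ℝ}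
    (hr : 0 < r) (hrr : r ≤ r₀) (hur : (v (n + 1)).len < r) (hrv : r ≤ (v n).len)
    {G : Finset CantorNode} (hG : G ⊆ T.level (n + 1))
    (hGr : ∀ w ∈ G, ∃ y ∈ w.core, y ∈ Icc (x - r) (x + r)) :
    (∑ w ∈ G, w.mass) * -Real.log r ≤ ε := by
  have hε : 0 ≤ ε := by
    have hc := h.isChild n
    have := mul_nonneg hc.isGood.mass_pos.le ((Nat.cast_nonneg _).trans hc.le_mul_order)
    linarith [hc.mass_mul_le]
  have hlog : 0 < -Real.log r := neg_pos.2 (Real.log_neg hr (by linarith))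
  have hug := T.isGood _ _ (h.mem_level (n + 1))
  have hvg := T.isGood _ _ (h.mem_level n)
  have hdis : ∀ w ∈ G, w ≠ v (n + 1) → Disjoint (v (n + 1)).hull w.hull := fun w hw hne =>
    T.pairwiseDisjoint_level _ (h.mem_level _) (hG hw) hne.symm
  have hxu := hug.core_subset_hull (h.mem_core (n + 1))
  rcases le_or_gt r (v (n + 1)).buffer with hrb | hrb
  · have hsub : G ⊆ {v (n + 1)} := fun w hw => by
      obtain ⟨y, hy, hxy⟩ := hGr w hw
      by_contra hne
      exact Set.disjoint_left.1 (hdis w hw (by simpa using hne))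
        (CantorNode.mem_hull_of_mem_core (h.mem_core _) hrb hxy)
        ((T.isGood _ w (hG hw)).core_subset_hull hy)
    have h1 : ∑ w ∈ G, w.mass ≤ (v (n + 1)).mass :=
      (Finset.sum_le_sum_of_subset_of_nonneg hsub fun w hw _ => by
        rw [Finset.mem_singleton.1 hw]; exact hug.mass_pos.le).trans_eq (Finset.sum_singleton _ _)
    have h2 : -Real.log r ≤ -Real.log (v (n + 1)).len :=
      neg_le_neg (Real.log_le_log hug.len_pos hur.le)
    have h3 : (∑ w ∈ G, w.mass) * -Real.log r ≤ ε / 48 :=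
      (mul_le_mul h1 h2 hlog.le hug.mass_pos.le).trans (h.isChild n).mass_mul_log_le
    linarith
  · have hhull : ∀ w ∈ G, w.hull ⊆ Icc (x - 3 * r) (x + 3 * r) := fun w hw => by
      obtain ⟨y, hy, hxy⟩ := hGr w hw
      have hwg := T.isGood _ w (hG hw)
      rcases eq_or_ne w (v (n + 1)) with rfl | hne
      · exact CantorNode.hull_subset_of_mem_core hr (h.mem_core _) hur.le hrb.le
      · exact CantorNode.hull_subset_of_disjoint hwg.len_pos hwg.len_le_buffer (hdis w hw hne)
          hxu hy hxy
    have hbuf := CantorNode.sum_buffer_le ((T.pairwiseDisjoint_level (n + 1)).subset hG)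
      (by linarith) hhull (fun w hw => (T.isGood _ w (hG hw)).len_pos)
      (fun w hw => (T.isGood _ w (hG hw)).buffer_pos)
    have hm := hvg.mass_pos
    have hl := hvg.len_pos
    have h1 : ∑ w ∈ G, w.mass ≤ 48 * (v n).mass * r / (v n).len := by
      calc ∑ w ∈ G, w.mass ≤ ∑ w ∈ G, 16 * (v n).mass / (v n).len * w.buffer := by
            refine Finset.sum_le_sum fun w hw => ?_
            obtain ⟨y, hy, hxy⟩ := hGr w hw
            refine (T.isChild n _ (h.mem_level n) w
              (h.mem_children_of_mem hrv (hG hw) hy hxy)).mass_le.trans_eq ?_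
            ring
        _ = 16 * (v n).mass / (v n).len * ∑ w ∈ G, w.buffer := by rw [Finset.mul_sum]
        _ ≤ 16 * (v n).mass / (v n).len * (3 * r) := by gcongr; linarith
        _ = 48 * (v n).mass * r / (v n).len := by ring
    calc (∑ w ∈ G, w.mass) * -Real.log r
        ≤ 48 * (v n).mass * r / (v n).len * -Real.log r := by gcongr
      _ = 48 * (v n).mass * (r * -Real.log r) / (v n).len := by ring
      _ ≤ ε := by
        rw [div_le_iff₀ hl]
        exact h.mass_mul_le hr₀ n hr hrr hrv

theorem measure_Icc_le {μ : Measure ℝ} [IsProbabilityMeasure μ] (hμ : μ T.limitSet = 1)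
    (hμT : ∀ n, ∀ v ∈ T.level n, μ v.core ≤ ENNReal.ofReal v.mass) {r₀ : ℝ} (hr₀1 : r₀ < 1 / 4)
    (hr₀ : ∀ r, 0 < r → r ≤ r₀ → 192 * (r * -Real.log r) ≤ ε) {x r : ℝ} (hx : x ∈ T.limitSet)
    (hr : 0 < r) (hrr : r ≤ r₀) :
    μ (Icc (x - r) (x + r)) ≤ ENNReal.ofReal (ε * (-Real.log r)⁻¹) := by
  obtain ⟨v, h⟩ := T.exists_isBranch hx
  obtain ⟨n, hur, hrv⟩ := h.exists_len hr (by linarith)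
  set G := (T.level (n + 1)).filter fun w => ∃ y ∈ w.core, y ∈ Icc (x - r) (x + r) with hG
  have hGT : G ⊆ T.level (n + 1) := Finset.filter_subset _ _
  have hsum := h.sum_mass_le hr₀1 hr₀ hr hrr hur hrv hGT
    fun w hw => (Finset.mem_filter.1 hw).2
  have hlog : 0 < -Real.log r := neg_pos.2 (Real.log_neg hr (by linarith))
  have hsub : Icc (x - r) (x + r) ∩ T.limitSet ⊆ ⋃ w ∈ G, w.core := by
    rintro y ⟨hy, hyT⟩
    obtain ⟨w, hw, hyw⟩ := mem_iUnion₂.1 (mem_iInter.1 hyT (n + 1))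
    exact mem_biUnion (Finset.mem_filter.2 ⟨hw, y, hyw, hy⟩) hyw
  calc μ (Icc (x - r) (x + r)) = μ (Icc (x - r) (x + r) ∩ T.limitSet) :=
        (measure_inter_conull ((prob_compl_eq_zero_iff T.measurableSet_limitSet).2 hμ)).symm
    _ ≤ ∑ w ∈ G, μ w.core := (measure_mono hsub).trans (measure_biUnion_finset_le _ _)
    _ ≤ ∑ w ∈ G, ENNReal.ofReal w.mass := Finset.sum_le_sum fun w hw => hμT _ w (hGT hw)
    _ = ENNReal.ofReal (∑ w ∈ G, w.mass) := (ENNReal.ofReal_sum_of_nonneg fun w hw =>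
        (T.isGood _ w (hGT hw)).mass_pos.le).symm
    _ ≤ _ := by
      refine ENNReal.ofReal_le_ofReal ?_
      rwa [← div_eq_mul_inv, le_div_iff₀ hlog]

end CantorTree

theorem exists_exponents {δ : ℝ≥0∞} (hδ : 0 < δ) : ∃ A B : ℕ → ℝ, (∀ n, 0 < A n) ∧
    (∀ n, A n < B n) ∧ Tendsto (fun n => ENNReal.ofReal (A n)) atTop (nhds δ) ∧
    Tendsto (fun n => ENNReal.ofReal (B n)) atTop (nhds δ) := by
  induction δ with
  | top =>
    refine ⟨fun n => n + 1, fun n => n + 2, fun n => by positivity, fun n => by linarith, ?_, ?_⟩ <;>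
    exact ENNReal.tendsto_ofReal_atTop.comp
      (tendsto_atTop_add_const_right _ _ tendsto_natCast_atTop_atTop)
  | coe d =>
    have hd : 0 < (d : ℝ) := by exact_mod_cast hδ
    refine ⟨fun _ => d, fun n => d + 1 / ((n : ℝ) + 1), fun _ => hd, fun n => ?_, ?_, ?_⟩
    · have : 0 < 1 / ((n : ℝ) + 1) := by positivity
      linarith
    · simp
    · have := ENNReal.tendsto_ofReal
        ((tendsto_one_div_add_atTop_nhds_zero_nat (𝕜 := ℝ)).const_add (d : ℝ))
      simpa using this

theorem gaugeHaus_eq_top_of_massDistribution {S : Set ℝ}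
    (h : ∀ ε : ℝ, 0 < ε → ∃ (C : Set ℝ) (μ : Measure ℝ) (r₀ : ℝ), C ⊆ S ∧ μ C = 1 ∧ 0 < r₀ ∧
      ∀ x ∈ C, ∀ r : ℝ, 0 < r → r ≤ r₀ →
        μ (Icc (x - r) (x + r)) ≤ ENNReal.ofReal (ε * (-Real.log r)⁻¹)) :
    gaugeHaus (omegaS 1) S = ⊤ := by
  refine ENNReal.eq_top_of_forall_nnreal_le fun t => ?_
  obtain ⟨C, μ, r₀, hCS, hμ, hr₀, hball⟩ := h (1 / (t + 1)) (by positivity)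
  refine le_iSup₂_of_le r₀ hr₀ (le_iInf₂ fun a b => le_iInf₂ fun hcov hab => ?_)
  have hterm : ∀ i, μ (Ioo (a i) (b i) ∩ C) ≤
      ENNReal.ofReal (1 / (t + 1)) * ENNReal.ofReal (omegaS 1 (b i - a i)) := by
    intro i
    rcases (Ioo (a i) (b i) ∩ C).eq_empty_or_nonempty with h0 | ⟨x, hx, hxC⟩
    · simp [h0]
    · have hpos : 0 < b i - a i := by linarith [hx.1, hx.2]
      rw [← ENNReal.ofReal_mul (by positivity), omegaS, if_pos hpos, Real.rpow_neg_one]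
      refine le_trans (measure_mono ?_) (hball x hxC _ hpos (hab i).2)
      exact fun y hy => ⟨by linarith [hx.2, hy.1.1], by linarith [hx.1, hy.1.2]⟩
  have h1 : 1 ≤ ENNReal.ofReal (1 / (t + 1)) * ∑' i, ENNReal.ofReal (omegaS 1 (b i - a i)) := by
    rw [← hμ, ← ENNReal.tsum_mul_left]
    refine le_trans (measure_mono fun x hx => ?_)
      ((measure_iUnion_le _).trans (ENNReal.tsum_le_tsum hterm))
    rw [← iUnion_inter]
    exact ⟨hcov (hCS hx), hx⟩
  have hc : ENNReal.ofReal (t + 1) = t + 1 := by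
    rw [ENNReal.ofReal_add t.coe_nonneg zero_le_one, ENNReal.ofReal_coe_nnreal, ENNReal.ofReal_one]
  rw [one_div, ENNReal.ofReal_inv_of_pos (by positivity), hc] at h1
  have h2 := mul_le_mul_right h1 ((t : ℝ≥0∞) + 1)
  rw [mul_one, ← mul_assoc, ENNReal.mul_inv_cancel (by simp) (by simp), one_mul] at h2
  exact le_self_add.trans h2

/-- For irrational `α ∈ [0,1]` and `0 < δ ≤ ∞`: for every `ε > 0` there are a Borel set
`C ⊆ D(δ)`, a Borel probability measure `μ` with `μ(C) = 1`, and `r₀ ∈ (0,1)` such that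
`μ(B(x,r)) ≤ ε · (-log r)⁻¹` for all `x ∈ C` and `0 < r ≤ r₀`; in particular
`ℋ^{ω_1}(D(δ)) = ∞`. -/
theorem exists_massDistribution_on_resSet (α : ℝ) (hα : Irrational α)
    (hα01 : α ∈ Set.Icc (0 : ℝ) 1) (δ : ℝ≥0∞) (hδ : 0 < δ) :
    (∀ ε : ℝ, 0 < ε →
      ∃ (C : Set ℝ) (μ : Measure ℝ) (r₀ : ℝ),
        C ⊆ resSet α δ ∧ MeasurableSet C ∧
        IsProbabilityMeasure μ ∧ μ C = 1 ∧
        0 < r₀ ∧ r₀ < 1 ∧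
        ∀ x ∈ C, ∀ r : ℝ, 0 < r → r ≤ r₀ →
          μ (Set.Icc (x - r) (x + r)) ≤ ENNReal.ofReal (ε * (-Real.log r)⁻¹)) ∧
    gaugeHaus (omegaS 1) (resSet α δ) = ⊤ := by
  have key : ∀ ε : ℝ, 0 < ε →
      ∃ (C : Set ℝ) (μ : Measure ℝ) (r₀ : ℝ),
        C ⊆ resSet α δ ∧ MeasurableSet C ∧
        IsProbabilityMeasure μ ∧ μ C = 1 ∧
        0 < r₀ ∧ r₀ < 1 ∧
        ∀ x ∈ C, ∀ r : ℝ, 0 < r → r ≤ r₀ →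
          μ (Set.Icc (x - r) (x + r)) ≤ ENNReal.ofReal (ε * (-Real.log r)⁻¹) := by
    intro ε hε
    obtain ⟨A, B, hA, hAB, hAδ, hBδ⟩ := exists_exponents hδ
    obtain ⟨T⟩ := CantorTree.nonempty hα hA hAB (by positivity : 0 < ε / 48)
    obtain ⟨μ, hμ, hμ1, hμT⟩ := T.exists_measure
    obtain ⟨r₀, hr₀, hr₀1, hr₀ε⟩ := exists_radius (by norm_num : (0 : ℝ) < 192) hε
    exact ⟨T.limitSet, μ, r₀, CantorTree.limitSet_subset_resSet hAδ hBδ, T.measurableSet_limitSet,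
      hμ, hμ1, hr₀, by linarith,
      fun x hx r hr hrr => CantorTree.measure_Icc_le hμ1 hμT hr₀1 hr₀ε hx hr hrr⟩
  refine ⟨key, gaugeHaus_eq_top_of_massDistribution fun ε hε => ?_⟩
  obtain ⟨C, μ, r₀, hC, -, -, hμ, hr₀, -, h⟩ := key ε hε
  exact ⟨C, μ, r₀, hC, hμ, hr₀, h⟩
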